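/- Let p be a prime and w ∈ V_5 nonzero. If there exists a nonzero linear binary form ℓ over 𝔽_p that is apolar to w (i.e., w has Waring type ⟨1⟩), then S(w) = p⁴ − p³, i.e., Φ̂(w) = p^{−2} − p^{−3}. -/

import Mathlib

open Finset

/-- Multiplication of binary forms encoded by coefficient tuples: a binary form
`∑ i, f i • x^(a-i) * y^i` of degree `a` is encoded as the tuple `f : Fin (a+1) → k`,
and multiplication of forms is convolution of coefficient tuples. -/
def formMul {k : Type*} [CommRing k] {a b : ℕ} (f : Fin (a + 1) → k)
    (g : Fin (b + 1) → k) : Fin (a + b + 1) → k :=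
  fun i => ∑ q : Fin (a + 1) × Fin (b + 1),
    if (q.1 : ℕ) + (q.2 : ℕ) = (i : ℕ) then f q.1 * g q.2 else 0

/-- The pairing `(w, v) = ∑ i, w i * v i` between `V_n` and `V_n^*`. -/
def pair {k : Type*} [CommRing k] {n : ℕ} (w v : Fin (n + 1) → k) : k :=
  ∑ i, w i * v i

/-- A binary quintic form is singular if it is nonzero and, over an algebraic closure,
it is divisible by the square of a nonzero linear form. -/
def IsSingularQuintic {k : Type*} [Field k] (v : Fin 6 → k) : Prop :=
  v ≠ 0 ∧ ∃ (l : Fin 2 → AlgebraicClosure k) (c : Fin 4 → AlgebraicClosure k),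
    l ≠ 0 ∧
    (fun i => algebraMap k (AlgebraicClosure k) (v i)) = formMul (formMul l l) c

open scoped Classical in
/-- The exponential sum `S(w)` over binary quintic forms that are zero or singular. -/
noncomputable def expSum (p : ℕ) [Fact p.Prime] (w : Fin 6 → ZMod p) : ℂ :=
  ∑ v : Fin 6 → ZMod p,
    if v = 0 ∨ IsSingularQuintic v then
      Complex.exp (2 * Real.pi * Complex.I * ((pair w v).val : ℂ) / (p : ℂ))
    else 0

section SquarefreeCount

open Polynomial

variable {F : Type*} [Field F]

theorem dvd_of_sq_mul_eq_sq_mul {g g' h h' : F[X]} (hg : g ≠ 0) (hh' : Squarefree h')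
    (H : g ^ 2 * h = g' ^ 2 * h') : g ∣ g' := by
  obtain ⟨a, b, d, hab, rfl, rfl⟩ := UniqueFactorizationMonoid.exists_reduced_factors g hg g'
  have hd : d ^ 2 ≠ 0 := pow_ne_zero 2 (left_ne_zero_of_mul hg)
  have H' : a ^ 2 * h = b ^ 2 * h' := mul_left_cancel₀ hd (by linear_combination H)
  have ha : IsUnit a := by
    refine hh' a ?_
    rw [← sq]
    exact hab.pow.dvd_of_dvd_mul_left ⟨h, H'.symm⟩
  exact mul_dvd_mul_left d (ha.dvd)

theorem exists_sq_mul_squarefree {f : F[X]} (hf : f.Monic) :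
    ∃ g h : F[X], g.Monic ∧ h.Monic ∧ Squarefree h ∧ g ^ 2 * h = f := by
  induction hn : f.natDegree using Nat.strong_induction_on generalizing f with
  | _ n ih =>
    by_cases hs : Squarefree f
    · exact ⟨1, f, monic_one, hf, hs, by simp⟩
    · simp only [Squarefree, not_forall] at hs
      obtain ⟨x, ⟨y, rfl⟩, hu⟩ := hs
      have hx : x ≠ 0 := by
        rintro rfl
        exact hf.ne_zero (by simp)
      have hxm := monic_mul_leadingCoeff_inv hx
      set c := x.leadingCoeff with hc
      have hc0 : c ≠ 0 := leadingCoeff_ne_zero.2 hx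
      set x' := x * C c⁻¹
      have hcc : C c⁻¹ * C c = (1 : F[X]) := by rw [← C_mul, inv_mul_cancel₀ hc0, C_1]
      have e : x * x * y = x' ^ 2 * (C c ^ 2 * y) := by
        simp only [x']
        linear_combination (-(x * x * y) * (C c⁻¹ * C c + 1)) * hcc
      have hu' : x'.natDegree ≠ 0 := by
        intro h0
        apply hu
        have := hxm.natDegree_eq_zero.1 h0
        exact IsUnit.of_mul_eq_one _ this
      rw [e] at hf hn ⊢
      have hy := (hxm.pow 2).of_mul_monic_left hf
      have hdeg := (hxm.pow 2).natDegree_mul hy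
      rw [hxm.natDegree_pow] at hdeg
      obtain ⟨g, h, hg, hh, hs, H⟩ := ih _ (by omega) hy rfl
      exact ⟨x' * g, h, hxm.mul hg, hh, hs, by rw [← H]; ring⟩

variable [Fintype F]

/-- Monic polynomials of degree `n` correspond to their tuples of lower coefficients. -/
noncomputable def monicEquivFn (n : ℕ) : {f : F[X] // f.Monic ∧ f.natDegree = n} ≃ (Fin n → F) :=
  (monicEquivDegreeLT n).trans (degreeLTEquiv F n).toEquiv

variable (F) in
theorem finite_monic_natDegree_eq (n : ℕ) : {f : F[X] | f.Monic ∧ f.natDegree = n}.Finite :=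
  Finite.of_equiv _ (monicEquivFn n).symm

variable (F) in
/-- The monic polynomials of degree `n` over a finite field. -/
noncomputable def monics (n : ℕ) : Finset F[X] := (finite_monic_natDegree_eq F n).toFinset

theorem mem_monics {n : ℕ} {f : F[X]} : f ∈ monics F n ↔ f.Monic ∧ f.natDegree = n := by
  simp [monics]

theorem card_monics (n : ℕ) : #(monics F n) = Fintype.card F ^ n := by
  rw [monics, ← Set.ncard_eq_toFinset_card _ (finite_monic_natDegree_eq F n), ← Nat.card_coe_set_eq]
  refine (Nat.card_congr (monicEquivFn (F := F) n)).trans ?_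
  simp

open scoped Classical in
variable (F) in
/-- The squarefree monic polynomials of degree `n` over a finite field. -/
noncomputable def sqfreeMonics (n : ℕ) : Finset F[X] := (monics F n).filter Squarefree

theorem mem_sqfreeMonics {n : ℕ} {f : F[X]} :
    f ∈ sqfreeMonics F n ↔ f.Monic ∧ f.natDegree = n ∧ Squarefree f := by
  simp [sqfreeMonics, mem_monics, and_assoc]

theorem card_monics_eq_sum (n : ℕ) :
    Fintype.card F ^ n =
      ∑ k ∈ range (n / 2 + 1), Fintype.card F ^ k * #(sqfreeMonics F (n - 2 * k)) := by
  rw [← card_monics]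
  simp_rw [← card_monics, ← card_product]
  rw [← card_sigma]
  symm
  refine card_bij (fun x _ => x.2.1 ^ 2 * x.2.2) ?_ ?_ ?_
  · rintro ⟨k, g, h⟩ hx
    simp only [mem_sigma, mem_product, mem_monics, mem_sqfreeMonics, mem_range] at hx ⊢
    obtain ⟨hk, ⟨hg, hgk⟩, hh, hhn, -⟩ := hx
    refine ⟨(hg.pow 2).mul hh, ?_⟩
    rw [(hg.pow 2).natDegree_mul hh, hg.natDegree_pow]
    omega
  · rintro ⟨k, g, h⟩ hx ⟨k', g', h'⟩ hx' H
    simp only [mem_sigma, mem_product, mem_monics, mem_sqfreeMonics, mem_range] at hx hx' H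
    obtain ⟨hk, ⟨hg, rfl⟩, hh, hhn, hs⟩ := hx
    obtain ⟨hk', ⟨hg', rfl⟩, hh', hhn', hs'⟩ := hx'
    obtain rfl : g = g' := eq_of_monic_of_associated hg hg' <| associated_of_dvd_dvd
      (dvd_of_sq_mul_eq_sq_mul hg.ne_zero hs' H) (dvd_of_sq_mul_eq_sq_mul hg'.ne_zero hs H.symm)
    obtain rfl := mul_left_cancel₀ (pow_ne_zero 2 hg.ne_zero) H
    rfl
  · intro f hf
    obtain ⟨hf, hfn⟩ := mem_monics.1 hf
    obtain ⟨g, h, hg, hh, hs, rfl⟩ := exists_sq_mul_squarefree hf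
    rw [(hg.pow 2).natDegree_mul hh, hg.natDegree_pow] at hfn
    refine ⟨⟨g.natDegree, g, h⟩, ?_, rfl⟩
    simp only [mem_sigma, mem_product, mem_monics, mem_sqfreeMonics, mem_range]
    exact ⟨by omega, ⟨hg, trivial⟩, hh, by omega, hs⟩

theorem card_sqfreeMonics_add_two (n : ℕ) :
    #(sqfreeMonics F (n + 2)) + Fintype.card F ^ (n + 1) = Fintype.card F ^ (n + 2) := by
  rw [card_monics_eq_sum (n + 2), pow_succ, card_monics_eq_sum n,
    show (n + 2) / 2 + 1 = n / 2 + 1 + 1 by omega, sum_range_succ' _ (n / 2 + 1), sum_mul, add_comm]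
  congr 1
  · refine sum_congr rfl fun k _ => ?_
    rw [show n + 2 - 2 * (k + 1) = n - 2 * k by omega]
    ring
  · simp

open scoped Classical in
theorem card_sqfreeMonics_eval_eq_zero (t : F) (n : ℕ) :
    #{f ∈ sqfreeMonics F (n + 1) | f.eval t = 0} = #{f ∈ sqfreeMonics F n | ¬ f.eval t = 0} := by
  symm
  refine card_bij (fun g _ => (X - C t) * g) ?_ ?_ ?_
  · intro g hg
    simp only [mem_filter, mem_sqfreeMonics] at hg ⊢
    obtain ⟨⟨hg, hn, hs⟩, h0⟩ := hg
    refine ⟨⟨(monic_X_sub_C t).mul hg, ?_, ?_⟩, by simp⟩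
    · rw [(monic_X_sub_C t).natDegree_mul hg, natDegree_X_sub_C, hn, add_comm]
    · refine squarefree_mul_iff.2 ⟨?_, (prime_X_sub_C t).squarefree, hs⟩
      rwa [(irreducible_X_sub_C t).isRelPrime_iff_not_dvd, dvd_iff_isRoot]
  · intro g _ g' _ h
    exact mul_left_cancel₀ (X_sub_C_ne_zero t) h
  · intro f hf
    simp only [mem_filter, mem_sqfreeMonics] at hf
    obtain ⟨⟨hf, hn, hs⟩, h0⟩ := hf
    obtain ⟨g, rfl⟩ := dvd_iff_isRoot.2 h0
    have hg := (monic_X_sub_C t).of_mul_monic_left hf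
    rw [(monic_X_sub_C t).natDegree_mul hg, natDegree_X_sub_C] at hn
    refine ⟨g, ?_, rfl⟩
    simp only [mem_filter, mem_sqfreeMonics]
    refine ⟨⟨hg, by omega, hs.of_mul_right⟩, ?_⟩
    have := (squarefree_mul_iff.1 hs).1
    rwa [(irreducible_X_sub_C t).isRelPrime_iff_not_dvd, dvd_iff_isRoot] at this

end SquarefreeCount

section Dehomogenization

open Polynomial

/-- The polynomial `v(1, X)` obtained by dehomogenizing the form with coefficients `v`. -/
noncomputable def dehom {k : Type*} [CommRing k] {n : ℕ} (v : Fin n → k) : k[X] :=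
  ∑ i : Fin n, monomial (i : ℕ) (v i)

section

variable {k : Type*} [CommRing k]

theorem coeff_dehom {n : ℕ} (v : Fin n → k) (i : Fin n) : (dehom v).coeff i = v i := by
  simp [dehom, coeff_monomial, Fin.val_inj]

theorem coeff_dehom_of_le {n : ℕ} (v : Fin n → k) {i : ℕ} (hi : n ≤ i) :
    (dehom v).coeff i = 0 := by
  rw [dehom, finsetSum_coeff]
  exact sum_eq_zero fun j _ => coeff_monomial_of_ne _ (by omega)

theorem dehom_coeff {n : ℕ} {f : k[X]} (hf : f.natDegree < n) :
    dehom (fun i : Fin n => f.coeff i) = f := by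
  ext i
  by_cases hi : i < n
  · exact coeff_dehom (fun i : Fin n => f.coeff i) ⟨i, hi⟩
  · rw [coeff_dehom_of_le _ (by omega), coeff_eq_zero_of_natDegree_lt (by omega)]

theorem dehom_injective {n : ℕ} : Function.Injective (dehom : (Fin n → k) → k[X]) := by
  intro v v' h
  ext i
  rw [← coeff_dehom v, h, coeff_dehom]

theorem natDegree_dehom_le {n : ℕ} (v : Fin (n + 1) → k) : (dehom v).natDegree ≤ n :=
  natDegree_le_iff_coeff_eq_zero.2 fun _ hi => coeff_dehom_of_le v hi

theorem dehom_formMul {a b : ℕ} (f : Fin (a + 1) → k) (g : Fin (b + 1) → k) :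
    dehom (formMul f g) = dehom f * dehom g := by
  simp only [dehom, formMul, map_sum, sum_mul_sum, monomial_mul_monomial]
  rw [sum_comm, Fintype.sum_prod_type]
  refine sum_congr rfl fun i _ => sum_congr rfl fun j _ => ?_
  rw [sum_eq_single (⟨i + j, by omega⟩ : Fin (a + b + 1))]
  · simp
  · intro q _ hq
    rw [if_neg, map_zero]
    exact fun h => hq (Fin.ext h.symm)
  · simp

theorem map_dehom {K : Type*} [CommRing K] (φ : k →+* K) {n : ℕ} (v : Fin n → k) :
    dehom (fun i => φ (v i)) = (dehom v).map φ := by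
  simp [dehom, Polynomial.map_sum]

theorem dehom_fin_two (l : Fin 2 → k) : dehom l = C (l 0) + C (l 1) * X := by
  simp [dehom, Fin.sum_univ_two, ← C_mul_X_pow_eq_monomial]

end

theorem eq_formMul_formMul_iff {k K : Type*} [Field k] [Field K] [Algebra k K] {v : Fin 6 → k}
    (l : Fin 2 → K) (c : Fin 4 → K) :
    (fun i => algebraMap k K (v i)) = formMul (formMul l l) c ↔
      (dehom v).map (algebraMap k K) = (C (l 0) + C (l 1) * X) ^ 2 * dehom c := by
  rw [← map_dehom, ← dehom_fin_two, sq, ← dehom_formMul, ← dehom_formMul (formMul l l) c]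
  exact dehom_injective.eq_iff.symm

theorem exists_eq_formMul_formMul_iff {k K : Type*} [Field k] [PerfectField k] [Field K]
    [Algebra k K] [IsAlgClosed K] {v : Fin 6 → k} (hv : v ≠ 0) :
    (∃ (l : Fin 2 → K) (c : Fin 4 → K), l ≠ 0 ∧
      (fun i => algebraMap k K (v i)) = formMul (formMul l l) c) ↔
      ¬ Squarefree (dehom v) ∨ (dehom v).natDegree ≤ 3 := by
  have hv' : dehom v ≠ 0 := fun h => hv (dehom_injective (h.trans (by simp [dehom])))
  simp only [eq_formMul_formMul_iff]
  constructor
  · rintro ⟨l, c, hl, h⟩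
    by_cases h1 : l 1 = 0
    · right
      rw [← natDegree_map (algebraMap k K), h, h1]
      simp only [map_zero, zero_mul, add_zero, ← C_pow]
      exact (natDegree_C_mul_le _ _).trans (natDegree_dehom_le c)
    · left
      intro hs
      have hs' := ((PerfectField.separable_iff_squarefree.2 hs).map (f := algebraMap k K)).squarefree
      have hu := hs' (C (l 0) + C (l 1) * X) ⟨dehom c, by rw [h, sq]⟩
      have := natDegree_eq_zero_of_isUnit hu
      rw [add_comm, natDegree_linear h1] at this
      exact one_ne_zero this
  · rintro (h | h)
    · simp only [Squarefree, not_forall] at h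
      obtain ⟨d, ⟨e, he⟩, hu⟩ := h
      have hd0 : d ≠ 0 := by
        rintro rfl
        simp [hv'] at he
      have hdeg : (d.map (algebraMap k K)).degree ≠ 0 := by
        rw [degree_map]
        exact fun h => hu (isUnit_iff_degree_eq_zero.2 h)
      obtain ⟨r, hr⟩ := IsAlgClosed.exists_root _ hdeg
      obtain ⟨d', hd'⟩ := dvd_iff_isRoot.2 hr
      have H : (dehom v).map (algebraMap k K) =
          (C (-r) + C 1 * X) ^ 2 * (d' ^ 2 * e.map (algebraMap k K)) := by
        rw [he, Polynomial.map_mul, Polynomial.map_mul, hd', C_neg, C_1]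
        ring
      have hc : (d' ^ 2 * e.map (algebraMap k K)).natDegree < 4 := by
        have h5 := natDegree_dehom_le v
        rw [← natDegree_map (algebraMap k K), H] at h5
        have hm : (C (-r) + C 1 * X : K[X]).Monic := by
          rw [C_neg, C_1, one_mul, neg_add_eq_sub]
          exact monic_X_sub_C r
        have hm1 : (C (-r) + C 1 * X : K[X]).natDegree = 1 := by
          rw [add_comm, natDegree_linear one_ne_zero]
        have h0 : d' ^ 2 * e.map (algebraMap k K) ≠ 0 := by
          intro h0
          rw [h0, mul_zero, Polynomial.map_eq_zero] at H
          exact hv' H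
        rw [(hm.pow 2).natDegree_mul' h0, hm.natDegree_pow, hm1] at h5
        omega
      exact ⟨![-r, 1], fun i => (d' ^ 2 * e.map (algebraMap k K)).coeff i,
        fun h => by simpa using congrFun h 1, by rw [dehom_coeff hc]; exact H⟩
    · refine ⟨![1, 0], fun i => ((dehom v).map (algebraMap k K)).coeff i,
        fun h => by simpa using congrFun h 0, ?_⟩
      rw [dehom_coeff (by rw [natDegree_map]; omega)]
      simp

/-- Over a perfect field, a nonzero binary quintic form is singular iff its dehomogenization
has a repeated factor or has degree at most three (a double root at infinity). -/
theorem isSingularQuintic_iff {k : Type*} [Field k] [PerfectField k] {v : Fin 6 → k}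
    (hv : v ≠ 0) :
    IsSingularQuintic v ↔ ¬ Squarefree (dehom v) ∨ (dehom v).natDegree ≤ 3 := by
  rw [← exists_eq_formMul_formMul_iff (K := AlgebraicClosure k) hv]
  exact and_iff_right hv

end Dehomogenization

section ExponentialSum

open Polynomial

theorem not_zero_or_isSingularQuintic_iff {k : Type*} [Field k] [PerfectField k] (v : Fin 6 → k) :
    ¬ (v = 0 ∨ IsSingularQuintic v) ↔ Squarefree (dehom v) ∧ 4 ≤ (dehom v).natDegree := by
  by_cases hv : v = 0
  · subst hv
    simp [dehom]
  · rw [isSingularQuintic_iff hv]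
    simp only [hv, false_or, not_or, not_not, not_le]
    rfl

theorem pair_smul {k : Type*} [CommRing k] {n : ℕ} (w v : Fin (n + 1) → k) (u : k) :
    pair w (u • v) = u * pair w v := by
  simp only [pair, Pi.smul_apply, smul_eq_mul, mul_sum]
  exact sum_congr rfl fun _ _ => by ring

theorem dehom_smul {k : Type*} [CommRing k] {n : ℕ} (v : Fin n → k) (u : k) :
    dehom (u • v) = C u * dehom v := by
  simp [dehom, mul_sum, C_mul_monomial]

theorem pair_formMul {k : Type*} [CommRing k] {a b : ℕ} (w : Fin (a + b + 1) → k)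
    (f : Fin (a + 1) → k) (g : Fin (b + 1) → k) :
    pair w (formMul f g) = ∑ i : Fin (a + 1), ∑ j : Fin (b + 1), w ⟨i + j, by omega⟩ * (f i * g j) := by
  simp only [pair, formMul, mul_sum]
  rw [sum_comm, Fintype.sum_prod_type]
  refine sum_congr rfl fun i _ => sum_congr rfl fun j _ => ?_
  rw [sum_eq_single (⟨i + j, by omega⟩ : Fin (a + b + 1))]
  · simp
  · intro q _ hq
    rw [if_neg, mul_zero]
    exact fun h => hq (Fin.ext h.symm)
  · simp

theorem pair_six {k : Type*} [CommRing k] (w v : Fin 6 → k) :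
    pair w v = w 0 * v 0 + w 1 * v 1 + w 2 * v 2 + w 3 * v 3 + w 4 * v 4 + w 5 * v 5 :=
  Fin.sum_univ_six _

/-- A linear form apolar to `w` forces the pairing with `w` to be a multiple of the evaluation at
the root of the linear form (the leading coefficient if that root is at infinity). -/
theorem pair_eq_of_apolar {k : Type*} [Field k] {w : Fin 6 → k} {l : Fin 2 → k} (hl : l ≠ 0)
    (hap : ∀ h : Fin 5 → k, pair w (formMul l h) = 0) :
    (∃ t, ∀ v : Fin 6 → k, pair w v = w 0 * (dehom v).eval t) ∨
      ∀ v : Fin 6 → k, pair w v = w 5 * (dehom v).coeff 5 := by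
  have rel (i : Fin 5) : w i.castSucc * l 0 + w i.succ * l 1 = 0 := by
    have h := (pair_formMul (a := 1) (b := 4) w l (Pi.single i 1)).symm.trans (hap _)
    have e : (⟨1 + i, by omega⟩ : Fin 6) = i.succ := Fin.ext (add_comm _ _)
    have e' : (⟨i, by omega⟩ : Fin 6) = i.castSucc := rfl
    simpa [Fin.sum_univ_two, Pi.single_apply, e, e'] using h
  have h0 := rel 0
  have h1 := rel 1
  have h2 := rel 2
  have h3 := rel 3
  have h4 := rel 4
  simp only [Fin.reduceCastSucc, Fin.reduceSucc] at h0 h1 h2 h3 h4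
  by_cases hb : l 1 = 0
  · right
    have ha : l 0 ≠ 0 := by
      intro ha
      apply hl
      ext i
      fin_cases i
      exacts [ha, hb]
    simp only [hb, mul_zero, add_zero, mul_eq_zero, ha, or_false] at h0 h1 h2 h3 h4
    intro v
    rw [show (dehom v).coeff 5 = v 5 from coeff_dehom v 5, pair_six]
    simp [*]
  · left
    refine ⟨-l 0 / l 1, fun v => ?_⟩
    set t := -l 0 / l 1 with ht
    have hlt : l 0 = -(t * l 1) := by rw [ht]; field_simp
    have step {x y : k} (h : x * l 0 + y * l 1 = 0) : y = t * x := by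
      apply mul_right_cancel₀ hb
      rw [hlt] at h
      linear_combination h
    simp only [pair_six, Fin.sum_univ_six, dehom]
    rw [step h4, step h3, step h2, step h1, step h0]
    simp
    ring

variable {F : Type*} [Field F] [Fintype F]

theorem disjoint_sqfreeMonics {m n : ℕ} (h : m ≠ n) :
    Disjoint (sqfreeMonics F m) (sqfreeMonics F n) := by
  rw [disjoint_left]
  intro f hf hf'
  exact h ((mem_sqfreeMonics.1 hf).2.1.symm.trans (mem_sqfreeMonics.1 hf').2.1)

open scoped Classical in
theorem card_sqfreeMonics_pair_eq_zero {w : Fin 6 → F} (hw : w ≠ 0) {l : Fin 2 → F} (hl : l ≠ 0)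
    (hap : ∀ h : Fin 5 → F, pair w (formMul l h) = 0) :
    #{f ∈ sqfreeMonics F 4 ∪ sqfreeMonics F 5 | pair w (fun i => f.coeff i) = 0} =
      #(sqfreeMonics F 4) := by
  rw [filter_union, card_union_of_disjoint
    (disjoint_filter_filter (disjoint_sqfreeMonics (by norm_num)))]
  have hd {f : F[X]} {n : ℕ} (hn : n < 6) (hf : f ∈ sqfreeMonics F n) :
      dehom (fun i : Fin 6 => f.coeff i) = f :=
    dehom_coeff ((mem_sqfreeMonics.1 hf).2.1.trans_lt hn)
  have hne (h : ∀ v : Fin 6 → F, pair w v = 0) : False := by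
    apply hw
    ext i
    simpa [pair, Pi.single_apply] using h (Pi.single i 1)
  rcases pair_eq_of_apolar hl hap with ⟨t, h⟩ | h
  · have h0 : w 0 ≠ 0 := fun h0 => hne fun v => by rw [h, h0, zero_mul]
    have e {n : ℕ} (hn : n < 6) : {f ∈ sqfreeMonics F n | pair w (fun i => f.coeff i) = 0} =
        {f ∈ sqfreeMonics F n | f.eval t = 0} :=
      filter_congr fun f hf => by simp [h, hd hn hf, h0]
    rw [e (by norm_num), e (by norm_num), card_sqfreeMonics_eval_eq_zero t 4,
      card_filter_add_card_filter_not]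
  · have h5 : w 5 ≠ 0 := fun h5 => hne fun v => by rw [h, h5, zero_mul]
    rw [filter_true_of_mem, filter_false_of_mem, card_empty, add_zero]
    · intro f hf
      rw [h, hd (by norm_num) hf]
      obtain ⟨hm, hn, -⟩ := mem_sqfreeMonics.1 hf
      have h1 := hm.coeff_natDegree
      rw [hn] at h1
      rwa [h1, mul_one]
    · intro f hf
      rw [h, hd (by norm_num) hf, coeff_eq_zero_of_natDegree_lt, mul_zero]
      rw [(mem_sqfreeMonics.1 hf).2.1]
      norm_num

open scoped Classical in
/-- Nonsingular quintic forms are uniquely a nonzero scalar times a form whose dehomogenization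
is monic squarefree of degree four or five. -/
theorem sum_nonsingular {M : Type*} [AddCommMonoid M] (φ : (Fin 6 → F) → M) :
    ∑ v with ¬ (v = 0 ∨ IsSingularQuintic v), φ v =
      ∑ f ∈ sqfreeMonics F 4 ∪ sqfreeMonics F 5, ∑ u ∈ univ.erase (0 : F),
        φ (u • fun i : Fin 6 => f.coeff i) := by
  rw [← sum_product']
  symm
  have hd {f : F[X]} (hf : f ∈ sqfreeMonics F 4 ∪ sqfreeMonics F 5) :
      f.Monic ∧ Squarefree f ∧ 4 ≤ f.natDegree ∧ dehom (fun i : Fin 6 => f.coeff i) = f := by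
    rw [mem_union, mem_sqfreeMonics, mem_sqfreeMonics] at hf
    obtain ⟨hm, hn, hs⟩ | ⟨hm, hn, hs⟩ := hf <;>
    exact ⟨hm, hs, by omega, dehom_coeff (by omega)⟩
  refine sum_bij (fun x _ => x.2 • fun i : Fin 6 => x.1.coeff i) ?_ ?_ ?_ ?_
  · rintro ⟨f, u⟩ hx
    simp only [mem_product, mem_erase, mem_univ, and_true] at hx
    obtain ⟨hm, hs, hn, hf⟩ := hd hx.1
    rw [mem_filter_univ, not_zero_or_isSingularQuintic_iff, dehom_smul, hf,
      natDegree_C_mul hx.2]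
    refine ⟨?_, hn⟩
    exact (associated_unit_mul_left f (C u) (isUnit_C.2 hx.2.isUnit)).squarefree_iff.2 hs
  · rintro ⟨f, u⟩ hx ⟨f', u'⟩ hx' h
    simp only [mem_product, mem_erase, mem_univ, and_true] at hx hx'
    obtain ⟨hm, -, -, hf⟩ := hd hx.1
    obtain ⟨hm', -, -, hf'⟩ := hd hx'.1
    have h' := congrArg dehom h
    simp only [dehom_smul, hf, hf'] at h'
    have hu : u = u' := by
      simpa [hm.leadingCoeff, hm'.leadingCoeff] using congrArg leadingCoeff h'
    subst hu
    rw [mul_left_cancel₀ (C_ne_zero.2 hx.2) h']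
  · intro v hv
    rw [mem_filter_univ, not_zero_or_isSingularQuintic_iff] at hv
    obtain ⟨hs, hn⟩ := hv
    have h5 : (dehom v).natDegree ≤ 5 := natDegree_dehom_le v
    set c := (dehom v).leadingCoeff
    have hc : c ≠ 0 := leadingCoeff_ne_zero.2 hs.ne_zero
    have hm : (C c⁻¹ * dehom v).Monic := by
      rw [mul_comm]
      exact monic_mul_leadingCoeff_inv hs.ne_zero
    have hs' : Squarefree (C c⁻¹ * dehom v) :=
      (associated_unit_mul_left _ _ (isUnit_C.2 (inv_ne_zero hc).isUnit)).squarefree_iff.2 hs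
    have hn' := natDegree_C_mul (p := dehom v) (inv_ne_zero hc)
    refine ⟨(C c⁻¹ * dehom v, c), ?_, ?_⟩
    · simp only [mem_product, mem_union, mem_sqfreeMonics, mem_erase, mem_univ, and_true]
      exact ⟨by
        rcases (by omega : (dehom v).natDegree = 4 ∨ (dehom v).natDegree = 5) with h | h
        · exact Or.inl ⟨hm, hn'.trans h, hs'⟩
        · exact Or.inr ⟨hm, hn'.trans h, hs'⟩, hc⟩
    · ext i
      simp [coeff_dehom, hc]
  · intros
    rfl

theorem sum_addChar_pair {ψ : AddChar F ℂ} (hψ : ψ.IsPrimitive) {w : Fin 6 → F} (hw : w ≠ 0) :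
    ∑ v, ψ (pair w v) = 0 := by
  let L : (Fin 6 → F) →+ F :=
    { toFun := pair w
      map_zero' := by simp [pair]
      map_add' := fun x y => by simp [pair, mul_add, sum_add_distrib] }
  refine AddChar.sum_eq_zero_of_ne_one (ψ := ψ.compAddMonoidHom L) ?_
  obtain ⟨i, hi⟩ := Function.ne_iff.1 hw
  intro h
  apply hψ hi
  ext x
  have e : pair w (Pi.single i x) = w i * x := by simp [pair, Pi.single_apply]
  have : ψ (pair w (Pi.single i x)) = 1 :=
    DFunLike.congr_fun (F := AddChar (Fin 6 → F) ℂ) h (Pi.single i x : Fin 6 → F)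
  simpa [e] using this

open scoped Classical in
theorem sum_singular_addChar {ψ : AddChar F ℂ} (hψ : ψ.IsPrimitive) {w : Fin 6 → F} (hw : w ≠ 0)
    {l : Fin 2 → F} (hl : l ≠ 0) (hap : ∀ h : Fin 5 → F, pair w (formMul l h) = 0) :
    ∑ v with v = 0 ∨ IsSingularQuintic v, ψ (pair w v) =
      (Fintype.card F : ℂ) ^ 4 - (Fintype.card F : ℂ) ^ 3 := by
  have total := sum_addChar_pair hψ hw
  rw [← sum_filter_add_sum_filter_not univ (fun v => v = 0 ∨ IsSingularQuintic v),
    sum_nonsingular] at total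
  have inner (a : F) : ∑ u ∈ univ.erase (0 : F), ψ (u * a) =
      (if a = 0 then (Fintype.card F : ℂ) else 0) - 1 := by
    rw [sum_erase_eq_sub (mem_univ _), AddChar.sum_mulShift a hψ]
    simp
  simp only [pair_smul, inner] at total
  rw [sum_sub_distrib, ← sum_filter, sum_const, sum_const, card_sqfreeMonics_pair_eq_zero hw hl hap,
    card_union_of_disjoint (disjoint_sqfreeMonics (by norm_num))] at total
  have h4 := congrArg (Nat.cast : ℕ → ℂ) (card_sqfreeMonics_add_two (F := F) 2)
  have h5 := congrArg (Nat.cast : ℕ → ℂ) (card_sqfreeMonics_add_two (F := F) 3)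
  push_cast [nsmul_eq_mul] at total h4 h5
  linear_combination total + (1 - (Fintype.card F : ℂ)) * h4 + h5

end ExponentialSum

/-- If `w ∈ V₅` is nonzero and some nonzero linear form `ℓ` over `𝔽_p` is apolar to `w`
(Waring type `⟨1⟩`), then `S(w) = p⁴ - p³`. -/
theorem stmt14 (p : ℕ) [Fact p.Prime] (w : Fin 6 → ZMod p) (hw : w ≠ 0)
    (l : Fin 2 → ZMod p) (hl : l ≠ 0)
    (hap : ∀ h : Fin 5 → ZMod p, pair w (formMul l h) = 0) :
    expSum p w = (p : ℂ) ^ 4 - (p : ℂ) ^ 3 := by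

  have h := sum_singular_addChar (ZMod.isPrimitive_stdAddChar p) hw hl hap
  rw [ZMod.card, sum_filter] at h
  simp only [ZMod.stdAddChar_apply, ZMod.toCircle_apply] at h
  rw [expSum, ← h]
  congr!
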